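/- Let T: Lip(X,E) → Lip(Y,F) be a linear biseparating map. If X is infinite, then E and F are isomorphic as topological vector spaces; that is, there exists a continuous linear bijection from E onto F whose inverse is also continuous. -/

import Mathlib

/-!
Write `S` for the inverse of `T`. The proof realises the isomorphism `E ≃ F` as a fibre of `T`:
for suitable points `x : X` and `y : Y`, the value `T f y` depends only on `f x`, so that
`J e = T (const e) y` is a linear bijection with inverse `w ↦ S (const w) x`, and `J` is bounded in
both directions for at least one such pair.

*Linked pairs.* Since disjointness of cozero sets is preserved both ways, every nonzero function
living inside `coz (S g)` has an image meeting `coz g`, and symmetrically. Shrinking balls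
alternately in `X` and in `Y` and using completeness of both spaces yields, in any given open set,
a pair `(x, y)` such that functions living near `x` have images seen near `y`, and conversely
(`exists_linked`). Not every point of `X` needs a partner, so no homeomorphism has to be built.

*Dependence on `f x` only.* If `f` vanishes on open sets accumulating at `x`, then `T f y = 0`,
because a small bump `g` in such an open set is disjoint from `f` while `T g` is nonzero somewhere
near `y`. If merely `f x = 0`, then `‖f‖` is `O(r)` on balls of radius `r` whose distance to `x` is
comparable to `r`; cutting `f` off to every second ball of a disjoint sequence of such balls shrinking
to `x` therefore gives a Lipschitz function `G`, and both `G` and `f - G` vanish on open sets accumulating at `x`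
(`Linked.apply_eq_zero_of_eq_zero`).

*Boundedness.* An infinite Hausdorff space contains infinitely many disjoint open sets, hence there
are linked pairs `(x n, y n)` lying in disjoint open sets of `X` and of `Y`. If infinitely many of
the fibre maps `J n` were unbounded, a disjoint sum of bumps with tiny values `e n` at `x n` and
`‖J n (e n)‖ > n` would be a bounded Lipschitz function with unbounded image
(`finite_unbounded`). The same holds for `S`, so some `n` is good for both.
-/

open Metric Set Function Bornology
open scoped NNReal

/-- `f` is a bounded Lipschitz function. -/
def IsLip {X E : Type*} [PseudoMetricSpace X] [NormedAddCommGroup E] (f : X → E) : Prop :=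
  (∃ K : ℝ≥0, LipschitzWith K f) ∧ ∃ C : ℝ, ∀ x, ‖f x‖ ≤ C

/-- The cozero set of `f`. -/
def coz {X E : Type*} [Zero E] (f : X → E) : Set X := {x | f x ≠ 0}

/-- The norm `‖f‖_L = max {‖f‖_∞, L(f)}` on bounded Lipschitz functions. -/
noncomputable def lipNorm {X E : Type*} [PseudoMetricSpace X] [NormedAddCommGroup E]
    (f : X → E) : ℝ :=
  max (⨆ x, ‖f x‖) (⨆ p : X × X, ‖f p.1 - f p.2‖ / dist p.1 p.2)

/-- `T` is a linear biseparating map from `Lip(X,E)` onto `Lip(Y,F)`: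
it maps bounded Lipschitz functions to bounded Lipschitz functions, is linear,
restricts to a bijection between the spaces of bounded Lipschitz functions, and
both `T` and its inverse are separating (disjointness preserving). -/
structure IsBisep (𝕂 : Type*) {X Y E F : Type*} [RCLike 𝕂]
    [PseudoMetricSpace X] [PseudoMetricSpace Y]
    [NormedAddCommGroup E] [NormedSpace 𝕂 E] [NormedAddCommGroup F] [NormedSpace 𝕂 F]
    (T : (X → E) → (Y → F)) : Prop where
  maps_lip : ∀ f, IsLip f → IsLip (T f)
  map_add : ∀ f g, IsLip f → IsLip g → T (f + g) = T f + T g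
  map_smul : ∀ (c : 𝕂) (f : X → E), IsLip f → T (c • f) = c • T f
  inj : ∀ f g, IsLip f → IsLip g → T f = T g → f = g
  surj : ∀ g, IsLip g → ∃ f, IsLip f ∧ T f = g
  sep : ∀ f g, IsLip f → IsLip g → coz f ∩ coz g = ∅ → coz (T f) ∩ coz (T g) = ∅
  sep_inv : ∀ f g, IsLip f → IsLip g → coz (T f) ∩ coz (T g) = ∅ → coz f ∩ coz g = ∅

/-! ### Bounded Lipschitz functions and cutoffs -/

section LipschitzFunctions

variable {X E : Type*} [MetricSpace X] [NormedAddCommGroup E]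

lemma IsLip.of_bound {f : X → E} {K C : ℝ} (hK : ∀ z w, ‖f z - f w‖ ≤ K * dist z w)
    (hC : ∀ z, ‖f z‖ ≤ C) : IsLip f := by
  refine ⟨⟨K.toNNReal, LipschitzWith.of_dist_le_mul fun z w => ?_⟩, C, hC⟩
  rw [dist_eq_norm]
  exact (hK z w).trans (by gcongr; exact Real.le_coe_toNNReal K)

lemma IsLip.exists_bound {f : X → E} (hf : IsLip f) :
    ∃ K C : ℝ, 0 ≤ K ∧ (∀ z w, ‖f z - f w‖ ≤ K * dist z w) ∧ ∀ z, ‖f z‖ ≤ C := by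
  obtain ⟨⟨K, hK⟩, C, hC⟩ := hf
  exact ⟨K, C, K.2, fun z w => by simpa [dist_eq_norm] using hK.dist_le_mul z w, hC⟩

lemma IsLip.isOpen_coz {f : X → E} (hf : IsLip f) : IsOpen (coz f) := by
  obtain ⟨⟨K, hK⟩, -⟩ := hf
  exact isOpen_ne_fun hK.continuous continuous_const

lemma IsLip.const (e : E) : IsLip (fun _ : X => e) :=
  IsLip.of_bound (K := 0) (C := ‖e‖) (by simp) (by simp)

lemma IsLip.sub {f g : X → E} (hf : IsLip f) (hg : IsLip g) : IsLip (f - g) := by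
  obtain ⟨K, C, -, hK, hC⟩ := hf.exists_bound
  obtain ⟨K', C', -, hK', hC'⟩ := hg.exists_bound
  refine IsLip.of_bound (K := K + K') (C := C + C') (fun z w => ?_) fun z => ?_
  · have h : (f - g) z - (f - g) w = (f z - f w) - (g z - g w) := by
      simp only [Pi.sub_apply]; abel
    rw [h]
    linarith [norm_sub_le (f z - f w) (g z - g w), hK z w, hK' z w]
  · exact (norm_sub_le _ _).trans (add_le_add (hC z) (hC' z))

lemma IsLip.add {f g : X → E} (hf : IsLip f) (hg : IsLip g) : IsLip (f + g) := by
  have h0 : IsLip (0 : X → E) := IsLip.const 0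
  simpa using hf.sub (h0.sub hg)

lemma IsLip.smul {𝕂 : Type*} [RCLike 𝕂] [NormedSpace 𝕂 E] (c : 𝕂) {f : X → E}
    (hf : IsLip f) : IsLip (c • f) := by
  obtain ⟨K, C, -, hK, hC⟩ := hf.exists_bound
  refine IsLip.of_bound (K := ‖c‖ * K) (C := ‖c‖ * C) (fun z w => ?_) fun z => ?_
  · rw [Pi.smul_apply, Pi.smul_apply, ← smul_sub, norm_smul, mul_assoc]
    gcongr
    exact hK z w
  · rw [Pi.smul_apply, norm_smul]
    gcongr
    exact hC z

lemma coz_nonempty {X E : Type*} [Zero E] {f : X → E} (hf : f ≠ 0) : (coz f).Nonempty :=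
  Function.ne_iff.mp hf

/-- The cutoff which equals `1` on the closed ball of radius `r / 2` around `x`, vanishes off the
open ball of radius `r`, and is `2 / r`-Lipschitz. -/
noncomputable def bump (x : X) (r : ℝ) (z : X) : ℝ := max 0 (min 1 (2 - 2 / r * dist z x))

lemma bump_nonneg (x : X) (r : ℝ) (z : X) : 0 ≤ bump x r z := le_max_left _ _

lemma bump_le_one (x : X) (r : ℝ) (z : X) : bump x r z ≤ 1 :=
  max_le zero_le_one (min_le_left _ _)

lemma bump_eq_one {x : X} {r : ℝ} (hr : 0 < r) {z : X} (h : dist z x ≤ r / 2) :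
    bump x r z = 1 := by
  have : 2 / r * dist z x ≤ 1 := by rw [div_mul_eq_mul_div, div_le_one hr]; linarith
  unfold bump
  rw [min_eq_left (by linarith), max_eq_right zero_le_one]

lemma bump_ne_zero_iff {x : X} {r : ℝ} (hr : 0 < r) {z : X} : bump x r z ≠ 0 ↔ dist z x < r := by
  have key : 2 / r * dist z x < 2 ↔ dist z x < r := by
    rw [div_mul_eq_mul_div, div_lt_iff₀ hr]
    constructor <;> intro h <;> linarith
  rw [← key, ← (bump_nonneg x r z).lt_iff_ne', bump]
  simp

lemma abs_bump_sub_le (x : X) {r : ℝ} (hr : 0 < r) (z w : X) :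
    |bump x r z - bump x r w| ≤ 2 / r * dist z w := by
  have h1 : |bump x r z - bump x r w| ≤
      |(2 - 2 / r * dist z x) - (2 - 2 / r * dist w x)| := by
    unfold bump
    refine (abs_max_sub_max_le_max _ _ _ _).trans (max_le (by simp) ?_)
    exact (abs_min_sub_min_le_max _ _ _ _).trans (max_le (by simp) le_rfl)
  refine h1.trans ?_
  have h2 : (2 - 2 / r * dist z x) - (2 - 2 / r * dist w x) = 2 / r * (dist w x - dist z x) := by
    ring
  rw [h2, abs_mul, abs_of_pos (by positivity)]
  gcongr
  rw [dist_comm z w]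
  exact abs_dist_sub_le w z x

variable (𝕂 : Type*) [RCLike 𝕂] [NormedSpace 𝕂 E]

/-- The function `f` cut off to the ball of radius `r` around `x`; it agrees with `f` on the ball
of radius `r / 2`. -/
noncomputable def cut (x : X) (r : ℝ) (f : X → E) (z : X) : E := (bump x r z : 𝕂) • f z

lemma norm_cut_le (x : X) (r : ℝ) (f : X → E) (z : X) : ‖cut 𝕂 x r f z‖ ≤ ‖f z‖ := by
  rw [cut, norm_smul, RCLike.norm_ofReal, abs_of_nonneg (bump_nonneg x r z)]
  exact mul_le_of_le_one_left (norm_nonneg _) (bump_le_one x r z)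

lemma cut_eq {x : X} {r : ℝ} (hr : 0 < r) (f : X → E) {z : X} (h : dist z x ≤ r / 2) :
    cut 𝕂 x r f z = f z := by
  simp [cut, bump_eq_one hr h]

lemma coz_cut {x : X} {r : ℝ} (hr : 0 < r) (f : X → E) :
    coz (cut 𝕂 x r f) = ball x r ∩ coz f := by
  ext z
  have := bump_ne_zero_iff hr (x := x) (z := z)
  simp only [coz, cut, mem_ofPred_eq, smul_ne_zero_iff, mem_inter_iff, mem_ball, ← this, ne_eq,
    RCLike.ofReal_eq_zero]

/-- Multiplying by a cutoff of radius `r` costs only a factor in the Lipschitz number as soon as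
`f` is of size `O(r)` on the ball where the cutoff lives. -/
lemma norm_cut_sub_le {x : X} {r : ℝ} (hr : 0 < r) {f : X → E} {K A : ℝ} (hA0 : 0 ≤ A)
    (hK : ∀ z w, ‖f z - f w‖ ≤ K * dist z w) (hA : ∀ z ∈ ball x r, ‖f z‖ ≤ A * r) (z w : X) :
    ‖cut 𝕂 x r f z - cut 𝕂 x r f w‖ ≤ (2 * A + K) * dist z w := by
  wlog hz : z ∈ ball x r generalizing z w
  · by_cases hw : w ∈ ball x r
    · rw [norm_sub_rev, dist_comm]
      exact this w z hw
    · have h0 : ∀ v, v ∉ ball x r → cut 𝕂 x r f v = 0 := fun v hv => by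
        by_contra h
        exact hv ((coz_cut 𝕂 hr f).subset h).1
      rw [h0 z hz, h0 w hw, sub_zero, norm_zero]
      have : 0 ≤ K * dist z w := (norm_nonneg _).trans (hK z w)
      nlinarith [mul_nonneg hA0 (dist_nonneg (x := z) (y := w))]
  have e : cut 𝕂 x r f z - cut 𝕂 x r f w =
      ((bump x r z - bump x r w : ℝ) : 𝕂) • f z + (bump x r w : 𝕂) • (f z - f w) := by
    simp only [cut, RCLike.ofReal_sub, sub_smul, smul_sub]
    abel
  rw [e]
  refine (norm_add_le _ _).trans ?_
  rw [norm_smul, norm_smul, RCLike.norm_ofReal, RCLike.norm_ofReal,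
    abs_of_nonneg (bump_nonneg x r w), add_mul]
  refine add_le_add ?_ ?_
  · calc |bump x r z - bump x r w| * ‖f z‖ ≤ (2 / r * dist z w) * (A * r) := by
          gcongr
          · exact abs_bump_sub_le x hr z w
          · exact hA z hz
      _ = 2 * A * dist z w := by field_simp
  · exact (mul_le_of_le_one_left (norm_nonneg _) (bump_le_one x r w)).trans (hK z w)

lemma isLip_cut_const (x : X) {r : ℝ} (hr : 0 < r) (e : E) :
    IsLip (cut 𝕂 x r fun _ => e) := by
  refine IsLip.of_bound (norm_cut_sub_le 𝕂 hr (K := 0) (A := ‖e‖ / r) (by positivity) (by simp) ?_)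
    (norm_cut_le 𝕂 x r _)
  intro z _
  field_simp
  exact le_rfl

/-- A disjoint sum of uniformly Lipschitz, uniformly bounded functions is bounded Lipschitz, with
at most twice the Lipschitz number. -/
lemma isLip_disjoint_sum {U : ℕ → Set X} (hU : Pairwise (Disjoint on U)) {h : ℕ → X → E}
    (hh : ∀ n, coz (h n) ⊆ U n) {K C : ℝ} (hK : ∀ n z w, ‖h n z - h n w‖ ≤ K * dist z w)
    (hC : ∀ n z, ‖h n z‖ ≤ C) :
    ∃ G : X → E, IsLip G ∧ ∀ n, ∀ z ∈ U n, G z = h n z := by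
  have hz : ∀ n, ∀ z ∈ U n, ∀ m, m ≠ n → h m z = 0 := fun n z hzn m hm => by
    by_contra hne
    exact (hU hm).le_bot ⟨hh m hne, hzn⟩
  have hG : ∀ n, ∀ z ∈ U n, ∑ᶠ m, h m z = h n z := fun n z hzn =>
    finsum_eq_single _ n (hz n z hzn)
  have hex : ∀ z, ∃ n, ∑ᶠ m, h m z = h n z ∧ ∀ m, m ≠ n → h m z = 0 := fun z => by
    by_cases hzU : ∃ n, z ∈ U n
    · obtain ⟨n, hn⟩ := hzU
      exact ⟨n, hG n z hn, hz n z hn⟩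
    · have h0 : ∀ m, h m z = 0 := fun m => by
        by_contra hne
        exact hzU ⟨m, hh m hne⟩
      exact ⟨0, by simp [h0], fun m _ => h0 m⟩
  refine ⟨fun z => ∑ᶠ m, h m z, IsLip.of_bound (K := 2 * K) (C := C) (fun z w => ?_) fun z => ?_,
    hG⟩
  · obtain ⟨n, hn, hn'⟩ := hex z
    obtain ⟨m, hm, hm'⟩ := hex w
    simp only [hn, hm]
    have h1 := hK n z w
    have h2 := hK m z w
    have h3 := norm_nonneg (h n z - h n w)
    by_cases hnm : n = m
    · subst hnm; linarith
    · rw [hm' n hnm, sub_zero] at h1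
      rw [hn' m (Ne.symm hnm), zero_sub, norm_neg] at h2
      linarith [norm_sub_le (h n z) (h m w)]
  · obtain ⟨n, hn, -⟩ := hex z
    simp only [hn]
    exact hC n z

end LipschitzFunctions

/-! ### Nested balls and geometric sequences -/

section Metric

variable {X : Type*} [MetricSpace X]

lemma exists_small_closedBall {O : Set X} (hO : IsOpen O) {p : X} (hp : p ∈ O) {R : ℝ}
    (hR : 0 < R) : ∃ ρ, 0 < ρ ∧ ρ ≤ R ∧ closedBall p ρ ⊆ O := by
  obtain ⟨ε, hε, h⟩ := Metric.nhds_basis_closedBall.mem_iff.mp (hO.mem_nhds hp)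
  exact ⟨min ε R, lt_min hε hR, min_le_right _ _,
    (closedBall_subset_closedBall (min_le_left _ _)).trans h⟩

lemma exists_mem_nested_balls [CompleteSpace X] (c : ℕ → X) (r : ℕ → ℝ) (hr : ∀ n, 0 < r n)
    (hsub : ∀ n, closedBall (c (n + 1)) (r (n + 1)) ⊆ ball (c n) (r n))
    (hhalf : ∀ n, r (n + 1) ≤ r n / 2) :
    ∃ x, (∀ n, x ∈ ball (c n) (r n)) ∧ ∀ U ∈ nhds x, ∃ n, ball (c n) (r n) ⊆ U := by
  have hlim : Filter.Tendsto r Filter.atTop (nhds 0) := by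
    have hle : ∀ n, r n ≤ r 0 * (1 / 2) ^ n := fun n => by
      induction n with
      | zero => simp
      | succ n ih => rw [pow_succ]; linarith [hhalf n]
    have := (tendsto_pow_atTop_nhds_zero_of_lt_one (r := (1 / 2 : ℝ)) (by norm_num)
      (by norm_num)).const_mul (r 0)
    rw [mul_zero] at this
    exact squeeze_zero (fun n => (hr n).le) hle this
  have hanti : Antitone fun n => ball (c n) (r n) :=
    antitone_nat_of_succ_le fun n => ball_subset_closedBall.trans (hsub n)
  have hmem : ∀ n m, n ≤ m → c m ∈ ball (c n) (r n) := fun n m h =>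
    hanti h (mem_ball_self (hr m))
  have hc : CauchySeq c := cauchySeq_of_le_tendsto_0' r
    (fun n m h => by rw [dist_comm]; exact (mem_ball.mp (hmem n m h)).le) hlim
  obtain ⟨x, hx⟩ := cauchySeq_tendsto_of_complete hc
  have hxm : ∀ n, x ∈ ball (c n) (r n) := fun n => hsub n <|
    isClosed_closedBall.mem_of_tendsto hx <| (Filter.eventually_ge_atTop (n + 1)).mono
      fun m hm => ball_subset_closedBall (hmem _ _ hm)
  refine ⟨x, hxm, fun U hU => ?_⟩
  obtain ⟨ε, hε, hεU⟩ := Metric.mem_nhds_iff.mp hU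
  obtain ⟨n, hn⟩ := (hlim.eventually (gt_mem_nhds (half_pos hε))).exists
  refine ⟨n, fun z hz => hεU ?_⟩
  have h1 := mem_ball.mp hz
  have h2 := mem_ball'.mp (hxm n)
  rw [mem_ball]
  linarith [dist_triangle z (c n) x]

/-- Near a non-isolated point there are points whose distances decrease geometrically. -/
lemma exists_seq_geometric {x : X} (hx : ∀ U ∈ nhds x, ∃ z ∈ U, z ≠ x) :
    ∃ p : ℕ → X, (∀ n, 0 < dist (p n) x) ∧ (∀ m n, m < n → dist (p n) x < dist (p m) x / 4) ∧
      ∀ ε > 0, ∃ N, ∀ n ≥ N, dist (p n) x < ε := by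
  obtain ⟨p, hp, hlt⟩ := exists_seq_of_forall_finset_exists (fun z : X => 0 < dist z x)
    (fun a b => dist b x < dist a x / 4) fun s hs => by
      have : (⋂ a ∈ s, ball x (dist a x / 4)) ∈ nhds x :=
        (Filter.biInter_finset_mem s).mpr fun a ha =>
          ball_mem_nhds x (by have := hs a ha; linarith)
      obtain ⟨z, hz, hne⟩ := hx _ this
      simp only [mem_iInter, mem_ball] at hz
      exact ⟨z, dist_pos.mpr hne, hz⟩
  refine ⟨p, hp, hlt, fun ε hε => ?_⟩
  have hle : ∀ n, dist (p n) x ≤ dist (p 0) x * (1 / 2) ^ n := fun n => by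
    induction n with
    | zero => simp
    | succ n ih => rw [pow_succ]; linarith [hlt n (n + 1) n.lt_succ_self, hp n]
  have := (tendsto_pow_atTop_nhds_zero_of_lt_one (r := (1 / 2 : ℝ)) (by norm_num)
    (by norm_num)).const_mul (dist (p 0) x)
  rw [mul_zero] at this
  obtain ⟨N, hN⟩ := Filter.eventually_atTop.mp (this.eventually (gt_mem_nhds hε))
  exact ⟨N, fun n hn => (hle n).trans_lt (hN n hn)⟩

end Metric

/-! ### Biseparating maps and linked points -/

section Biseparating

variable {𝕂 X Y E F : Type*} [RCLike 𝕂] [MetricSpace X] [MetricSpace Y]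
  [NormedAddCommGroup E] [NormedSpace 𝕂 E] [NormedAddCommGroup F] [NormedSpace 𝕂 F]
  {T : (X → E) → (Y → F)} {S : (Y → F) → (X → E)}

lemma IsBisep.map_zero (hT : IsBisep 𝕂 T) : T 0 = 0 := by
  simpa using hT.map_smul 0 0 (IsLip.const 0)

lemma IsBisep.map_sub (hT : IsBisep 𝕂 T) {f g : X → E} (hf : IsLip f) (hg : IsLip g) :
    T (f - g) = T f - T g := by
  have h := hT.map_add (f - g) g (hf.sub hg) hg
  rw [sub_add_cancel] at h
  rw [h, add_sub_cancel_right]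

lemma IsBisep.ne_zero (hT : IsBisep 𝕂 T) {f : X → E} (hf : IsLip f) (h0 : f ≠ 0) : T f ≠ 0 :=
  fun h => h0 (hT.inj f 0 hf (IsLip.const 0) (h.trans hT.map_zero.symm))

lemma IsBisep.meet (hT : IsBisep 𝕂 T) {f g : X → E} (hf : IsLip f) (hg : IsLip g)
    (h : (coz f ∩ coz g).Nonempty) : (coz (T f) ∩ coz (T g)).Nonempty := by
  rw [nonempty_iff_ne_empty] at h ⊢
  exact fun h' => h (hT.sep_inv f g hf hg h')

lemma IsBisep.exists_inverse (hT : IsBisep 𝕂 T) :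
    ∃ S : (Y → F) → (X → E), IsBisep 𝕂 S ∧ (∀ f, IsLip f → S (T f) = f) ∧
      ∀ g, IsLip g → T (S g) = g := by
  classical
  choose! S hS hTS using hT.surj
  have hST : ∀ f, IsLip f → S (T f) = f := fun f hf =>
    hT.inj _ _ (hS _ (hT.maps_lip f hf)) hf (hTS _ (hT.maps_lip f hf))
  refine ⟨S, ⟨hS, ?_, ?_, ?_, ?_, ?_, ?_⟩, hST, hTS⟩
  · intro f g hf hg
    refine hT.inj _ _ (hS _ (hf.add hg)) ((hS f hf).add (hS g hg)) ?_
    rw [hT.map_add _ _ (hS f hf) (hS g hg), hTS _ hf, hTS _ hg, hTS _ (hf.add hg)]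
  · intro c f hf
    refine hT.inj _ _ (hS _ (hf.smul c)) ((hS f hf).smul c) ?_
    rw [hT.map_smul _ _ (hS f hf), hTS _ hf, hTS _ (hf.smul c)]
  · intro f g hf hg h
    rw [← hTS f hf, h, hTS g hg]
  · exact fun f hf => ⟨T f, hT.maps_lip f hf, hST f hf⟩
  · intro f g hf hg h
    exact hT.sep_inv _ _ (hS f hf) (hS g hg) (by rwa [hTS f hf, hTS g hg])
  · intro f g hf hg h
    have := hT.sep _ _ (hS f hf) (hS g hg) h
    rwa [hTS f hf, hTS g hg] at this

/-- `x` and `y` are linked by `T` when `T` sends nonzero functions living close to `x` to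
functions that do not vanish identically close to `y`. -/
def Linked (T : (X → E) → (Y → F)) (x : X) (y : Y) : Prop :=
  ∀ V ∈ nhds y, ∃ U ∈ nhds x, ∀ f, IsLip f → f ≠ 0 → coz f ⊆ U → (coz (T f) ∩ V).Nonempty

/-- A nonzero function living where `S g` does not vanish has an image that meets `coz g`. -/
lemma IsBisep.meet_of_subset (hT : IsBisep 𝕂 T) (hS : IsBisep 𝕂 S)
    (hTS : ∀ g, IsLip g → T (S g) = g) {g : Y → F} (hg : IsLip g) {f : X → E} (hf : IsLip f)
    (h0 : f ≠ 0) (hsub : coz f ⊆ coz (S g)) : (coz (T f) ∩ coz g).Nonempty := by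
  have h := hT.meet hf (hS.maps_lip g hg) (by
    rw [inter_eq_left.mpr hsub]; exact coz_nonempty h0)
  rwa [hTS g hg] at h

/-- Alternately shrinking balls in `X` and in `Y` produces, inside the cozero set of any nonzero
function and of its image, a pair of points linked in both directions. -/
lemma exists_linked [CompleteSpace X] [CompleteSpace Y] [Nontrivial E] [Nontrivial F]
    (hT : IsBisep 𝕂 T) (hS : IsBisep 𝕂 S)
    (hST : ∀ f, IsLip f → S (T f) = f) (hTS : ∀ g, IsLip g → T (S g) = g)
    {u : X} {R : ℝ} (hR : 0 < R) {e : E} (he : e ≠ 0) :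
    ∃ x ∈ ball u R, ∃ y ∈ coz (T (cut 𝕂 u R fun _ => e)), Linked T x y ∧ Linked S y x := by
  obtain ⟨w, hw⟩ := exists_ne (0 : F)
  let B : X → ℝ → X → E := fun x r => cut 𝕂 x r fun _ => e
  let D : Y → ℝ → Y → F := fun y s => cut 𝕂 y s fun _ => w
  have hB : ∀ x r, 0 < r → IsLip (B x r) := fun x r hr => isLip_cut_const 𝕂 x hr e
  have hD : ∀ x r, 0 < r → IsLip (D x r) := fun x r hr => isLip_cut_const 𝕂 x hr w
  have cB : ∀ x r, 0 < r → coz (B x r) = ball x r := fun x r hr => by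
    have h : coz (fun _ : X => e) = univ := eq_univ_of_forall fun _ => he
    simp only [B, coz_cut 𝕂 hr, h, inter_univ]
  have cD : ∀ x r, 0 < r → coz (D x r) = ball x r := fun x r hr => by
    have h : coz (fun _ : Y => w) = univ := eq_univ_of_forall fun _ => hw
    simp only [D, coz_cut 𝕂 hr, h, inter_univ]
  have nB : ∀ x r, 0 < r → B x r ≠ 0 := fun x r hr h => by
    have : x ∈ coz (B x r) := by rw [cB x r hr]; exact mem_ball_self hr
    exact this (congrFun h x)
  -- A state is a ball in `X` and a ball in `Y`, the latter inside `coz (T (B x r))`.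
  let Inv : (X × ℝ) × (Y × ℝ) → Prop := fun p =>
    0 < p.1.2 ∧ 0 < p.2.2 ∧ ball p.2.1 p.2.2 ⊆ coz (T (B p.1.1 p.1.2))
  have step : ∀ p : {p // Inv p}, ∃ q : {q // Inv q},
      closedBall q.1.1.1 q.1.1.2 ⊆ ball p.1.1.1 p.1.1.2 ∩ coz (S (D p.1.2.1 p.1.2.2)) ∧
      closedBall q.1.2.1 q.1.2.2 ⊆ ball p.1.2.1 p.1.2.2 ∧
      q.1.1.2 ≤ p.1.1.2 / 2 ∧ q.1.2.2 ≤ p.1.2.2 / 2 := by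
    rintro ⟨⟨⟨x, r⟩, ⟨y, s⟩⟩, hr, hs, hsub⟩
    dsimp only at hr hs hsub ⊢
    have hD' := hD y s hs
    have hSD := hS.maps_lip _ hD'
    have h1 : (coz (B x r) ∩ coz (S (D y s))).Nonempty := by
      have := hS.meet (hT.maps_lip _ (hB x r hr)) hD'
        ⟨y, hsub (mem_ball_self hs), by rw [cD y s hs]; exact mem_ball_self hs⟩
      rwa [hST _ (hB x r hr)] at this
    rw [cB x r hr] at h1
    obtain ⟨x', hx'⟩ := h1
    obtain ⟨r', hr', hrr, hx'sub⟩ :=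
      exists_small_closedBall (isOpen_ball.inter hSD.isOpen_coz) hx' (half_pos hr)
    have hB' := hB x' r' hr'
    have h2 := hT.meet_of_subset hS hTS hD' hB' (nB x' r' hr') (by
      rw [cB x' r' hr']
      exact (ball_subset_closedBall.trans hx'sub).trans inter_subset_right)
    obtain ⟨y', hy'⟩ := h2
    obtain ⟨s', hs', hss, hy'sub⟩ := exists_small_closedBall
      ((hT.maps_lip _ hB').isOpen_coz.inter hD'.isOpen_coz) hy' (half_pos hs)
    refine ⟨⟨((x', r'), (y', s')), hr', hs', ?_⟩, hx'sub, ?_, hrr, hss⟩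
    · exact (ball_subset_closedBall.trans hy'sub).trans inter_subset_left
    · rw [← cD y s hs]
      exact hy'sub.trans inter_subset_right
  choose next hnext using step
  obtain ⟨y₀, hy₀⟩ := coz_nonempty (hT.ne_zero (hB u R hR) (nB u R hR))
  obtain ⟨s₀, hs₀, -, hsub₀⟩ := exists_small_closedBall
    (hT.maps_lip _ (hB u R hR)).isOpen_coz hy₀ one_pos
  let st : ℕ → {p // Inv p} := fun n => next^[n]
    ⟨((u, R), (y₀, s₀)), hR, hs₀, ball_subset_closedBall.trans hsub₀⟩
  have hst : ∀ n, st (n + 1) = next (st n) := fun n => Function.iterate_succ_apply' _ _ _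
  obtain ⟨x, hx, hxU⟩ := exists_mem_nested_balls (fun n => (st n).1.1.1) (fun n => (st n).1.1.2)
    (fun n => (st n).2.1)
    (fun n => by simp only [hst]; exact (hnext (st n)).1.trans inter_subset_left)
    (fun n => by simp only [hst]; exact (hnext (st n)).2.2.1)
  obtain ⟨y, hy, hyU⟩ := exists_mem_nested_balls (fun n => (st n).1.2.1) (fun n => (st n).1.2.2)
    (fun n => (st n).2.2.1)
    (fun n => by simp only [hst]; exact (hnext (st n)).2.1)
    (fun n => by simp only [hst]; exact (hnext (st n)).2.2.2)
  refine ⟨x, hx 0, y, hsub₀ (ball_subset_closedBall (hy 0)), fun V hV => ?_, fun U hU => ?_⟩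
  · obtain ⟨n, hn⟩ := hyU V hV
    refine ⟨_, isOpen_ball.mem_nhds (hx (n + 1)), fun f hf h0 hsub => ?_⟩
    have hs := (st n).2.2.1
    have h := hT.meet_of_subset hS hTS (hD _ _ hs) hf h0 (hsub.trans <| by
      simp only [hst]
      exact (ball_subset_closedBall.trans (hnext (st n)).1).trans inter_subset_right)
    rw [cD _ _ hs] at h
    exact h.mono (inter_subset_inter_right _ hn)
  · obtain ⟨n, hn⟩ := hxU U hU
    refine ⟨_, isOpen_ball.mem_nhds (hy n), fun g hg h0 hsub => ?_⟩
    have hr := (st n).2.1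
    have h := hS.meet_of_subset hT hST (hB _ _ hr) hg h0 (hsub.trans (st n).2.2.2)
    rw [cB _ _ hr] at h
    exact h.mono (inter_subset_inter_right _ hn)

/-- If `f` vanishes on open sets accumulating at `x`, then `T f` vanishes at a linked point `y`. -/
lemma Linked.apply_eq_zero [Nontrivial E] (hT : IsBisep 𝕂 T) {x : X} {y : Y} (hl : Linked T x y)
    {f : X → E} (hf : IsLip f)
    (h : ∀ U ∈ nhds x, ∃ p ∈ U, ∀ᶠ z in nhds p, f z = 0) : T f y = 0 := by
  by_contra hne
  obtain ⟨e, he⟩ := exists_ne (0 : E)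
  obtain ⟨U, hU, hl⟩ := hl _ ((hT.maps_lip f hf).isOpen_coz.mem_nhds hne)
  obtain ⟨U', hU'U, hU'o, hxU'⟩ := _root_.mem_nhds_iff.mp hU
  obtain ⟨p, hpU, hp⟩ := h U' (hU'o.mem_nhds hxU')
  obtain ⟨O, hO, hOo, hpO⟩ := _root_.mem_nhds_iff.mp hp
  obtain ⟨ρ, hρ, -, hsub⟩ := exists_small_closedBall (hU'o.inter hOo) ⟨hpU, hpO⟩ one_pos
  have hsub' : coz (cut 𝕂 p ρ fun _ => e) ⊆ U' ∩ O := by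
    rw [coz_cut 𝕂 hρ]
    exact inter_subset_left.trans (ball_subset_closedBall.trans hsub)
  have hg := isLip_cut_const 𝕂 p hρ e
  have h1 : cut 𝕂 p ρ (fun _ => e) p = e :=
    cut_eq 𝕂 hρ _ (by rw [dist_self]; exact (half_pos hρ).le)
  obtain ⟨v, hv1, hv2⟩ := hl _ hg (fun h0 => he (h1.symm.trans (congrFun h0 p)))
    ((hsub'.trans inter_subset_left).trans hU'U)
  have hdis : coz (cut 𝕂 p ρ fun _ => e) ∩ coz f = ∅ := by
    ext z
    simp only [mem_inter_iff, mem_empty_iff_false, iff_false, not_and]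
    exact fun hz1 hz2 => hz2 (hO (hsub' hz1).2)
  have := hT.sep _ _ hg hf hdis
  exact (this.subset ⟨hv1, hv2⟩ : v ∈ (∅ : Set Y))

/-- `T f y` depends only on the value `f x` at a linked point: a function vanishing at `x` splits
into two Lipschitz pieces each of which vanishes on open sets accumulating at `x`. -/
lemma Linked.apply_eq_zero_of_eq_zero [Nontrivial E] (hT : IsBisep 𝕂 T) {x : X} {y : Y}
    (hl : Linked T x y) {f : X → E} (hf : IsLip f) (hfx : f x = 0) : T f y = 0 := by
  by_cases hx : ∀ U ∈ nhds x, ∃ z ∈ U, z ≠ x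
  swap
  -- If `x` is isolated, then `f` already vanishes near `x`.
  · push Not at hx
    obtain ⟨U, hU, hUx⟩ := hx
    refine hl.apply_eq_zero hT hf fun V hV => ⟨x, mem_of_mem_nhds hV, ?_⟩
    filter_upwards [hU] with z hz
    rw [hUx z hz, hfx]
  obtain ⟨p, hp, hlt, hlim⟩ := exists_seq_geometric hx
  obtain ⟨K, C, hK0, hK, hC⟩ := hf.exists_bound
  have hr : ∀ n, 0 < dist (p n) x / 2 := fun n => half_pos (hp n)
  have hdisj : Pairwise (Disjoint on fun n => ball (p n) (dist (p n) x / 2)) := by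
    refine (pairwise_disjoint_on _).mpr fun m n hmn => ball_disjoint_ball ?_
    linarith [hlt m n hmn, dist_triangle_right (p m) (p n) x, dist_triangle (p m) (p n) x]
  -- On the ball of radius `r = dist (p n) x / 2`, the norm of `f` is at most `3 * K * r`.
  have hA : ∀ n, ∀ z ∈ ball (p n) (dist (p n) x / 2), ‖f z‖ ≤ 3 * K * (dist (p n) x / 2) := by
    intro n z hz
    have h1 := hK z x
    rw [hfx, sub_zero] at h1
    have h2 : dist z x ≤ 3 * (dist (p n) x / 2) := by
      linarith [dist_triangle z (p n) x, mem_ball.mp hz]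
    calc ‖f z‖ ≤ K * dist z x := h1
      _ ≤ K * (3 * (dist (p n) x / 2)) := by gcongr
      _ = _ := by ring
  obtain ⟨G, hG, hGU⟩ := isLip_disjoint_sum hdisj
    (h := fun n => if Even n then cut 𝕂 (p n) (dist (p n) x / 2) f else 0)
    (K := 2 * (3 * K) + K) (C := max C 0)
    (fun n => by
      split_ifs
      · rw [coz_cut 𝕂 (hr n)]; exact inter_subset_left
      · exact fun z hz => (hz rfl).elim)
    (fun n z w => by
      split_ifs
      · exact norm_cut_sub_le 𝕂 (hr n) (by positivity) hK (hA n) z w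
      · simp only [Pi.zero_apply, sub_zero, norm_zero]; positivity)
    (fun n z => by
      split_ifs
      · exact (norm_cut_le 𝕂 _ _ f z).trans ((hC z).trans (le_max_left _ _))
      · simp)
  have hnear : ∀ U ∈ nhds x, ∃ N, ∀ n ≥ N, p n ∈ U := fun U hU => by
    obtain ⟨ε, hε, hεU⟩ := Metric.mem_nhds_iff.mp hU
    obtain ⟨N, hN⟩ := hlim ε hε
    exact ⟨N, fun n hn => hεU (hN n hn)⟩
  -- `G` vanishes near the points with odd index, and `f - G` near those with even index.
  have h1 : T G y = 0 := hl.apply_eq_zero hT hG fun U hU => by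
    obtain ⟨N, hN⟩ := hnear U hU
    refine ⟨p (2 * N + 1), hN _ (by omega), ?_⟩
    filter_upwards [ball_mem_nhds _ (hr (2 * N + 1))] with z hz
    rw [hGU _ z hz, if_neg (by simp)]
    rfl
  have h2 : T (f - G) y = 0 := hl.apply_eq_zero hT (hf.sub hG) fun U hU => by
    obtain ⟨N, hN⟩ := hnear U hU
    refine ⟨p (2 * N), hN _ (by omega), ?_⟩
    filter_upwards [ball_mem_nhds _ (half_pos (hr (2 * N)))] with z hz
    have hz' := mem_ball.mp hz
    rw [Pi.sub_apply, hGU (2 * N) z (ball_subset_ball (half_le_self (hr _).le) hz),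
      if_pos (by simp), cut_eq 𝕂 (hr _) f hz'.le, sub_self]
  rw [hT.map_sub hf hG, Pi.sub_apply, h1, sub_zero] at h2
  exact h2

lemma Linked.apply_eq [Nontrivial E] (hT : IsBisep 𝕂 T) {x : X} {y : Y}
    (hl : Linked T x y) {f g : X → E} (hf : IsLip f) (hg : IsLip g) (h : f x = g x) :
    T f y = T g y := by
  have := hl.apply_eq_zero_of_eq_zero hT (hf.sub hg) (by simp [h])
  rwa [hT.map_sub hf hg, Pi.sub_apply, sub_eq_zero] at this

/-- The linear map `e ↦ T (const e) y` on constant functions. -/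
def fiberMap (hT : IsBisep 𝕂 T) (y : Y) : E →ₗ[𝕂] F where
  toFun e := T (fun _ => e) y
  map_add' a b := congrFun (hT.map_add _ _ (IsLip.const a) (IsLip.const b)) y
  map_smul' c a := congrFun (hT.map_smul c _ (IsLip.const a)) y

lemma fiberMap_leftInverse [Nontrivial F] (hT : IsBisep 𝕂 T) (hS : IsBisep 𝕂 S)
    (hST : ∀ f, IsLip f → S (T f) = f) {x : X} {y : Y} (hl : Linked S y x) (e : E) :
    fiberMap hS x (fiberMap hT y e) = e := by
  have h := hl.apply_eq hS (IsLip.const (T (fun _ => e) y)) (hT.maps_lip _ (IsLip.const e)) rfl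
  rw [hST _ (IsLip.const e)] at h
  exact h

/-- Along linked points lying in disjoint open sets, only finitely many of the fibre maps are
unbounded: otherwise a disjoint sum of small bumps would have an unbounded image. -/
lemma finite_unbounded [Nontrivial E] (hT : IsBisep 𝕂 T) {x : ℕ → X} {y : ℕ → Y}
    (hl : ∀ n, Linked T (x n) (y n)) {U : ℕ → Set X} (hU : Pairwise (Disjoint on U))
    (hUo : ∀ n, IsOpen (U n)) (hxU : ∀ n, x n ∈ U n) :
    {n | ¬ ∃ C, ∀ e, ‖fiberMap hT (y n) e‖ ≤ C * ‖e‖}.Finite := by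
  choose r hr hr1 hrU using fun n => exists_small_closedBall (hUo n) (hxU n) one_pos
  have key : ∀ n, ∃ e : E, ‖e‖ ≤ r n ∧ ((¬ ∃ C, ∀ e, ‖fiberMap hT (y n) e‖ ≤ C * ‖e‖) →
      (n : ℝ) < ‖fiberMap hT (y n) e‖) := fun n => by
    by_cases hn : ∃ C, ∀ e, ‖fiberMap hT (y n) e‖ ≤ C * ‖e‖
    · exact ⟨0, by simpa using (hr n).le, fun h => (h hn).elim⟩
    · by_contra! hcon
      refine hn (LinearMap.bound_of_ball_bound (hr n) n _ fun z hz => ?_)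
      exact (hcon z (mem_ball_zero_iff.mp hz).le).2
  choose e her hen using key
  obtain ⟨G, hG, hGU⟩ := isLip_disjoint_sum hU
    (h := fun n => cut 𝕂 (x n) (r n) fun _ => e n) (K := 2 * 1 + 0) (C := 1)
    (fun n => by
      rw [coz_cut 𝕂 (hr n)]
      exact inter_subset_left.trans (ball_subset_closedBall.trans (hrU n)))
    (fun n => norm_cut_sub_le 𝕂 (hr n) zero_le_one (by simp)
      (fun z _ => by simpa using her n))
    (fun n z => (norm_cut_le 𝕂 _ _ _ z).trans ((her n).trans (hr1 n)))
  obtain ⟨-, M, hM⟩ := hT.maps_lip G hG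
  have hval : ∀ n, T G (y n) = fiberMap hT (y n) (e n) := fun n =>
    (hl n).apply_eq hT hG (IsLip.const (e n)) <| by
      rw [hGU n _ (hxU n), cut_eq 𝕂 (hr n) _ (by rw [dist_self]; exact (half_pos (hr n)).le)]
  obtain ⟨N, hN⟩ := exists_nat_ge M
  refine (finite_lt_nat N).subset fun n hn => ?_
  have h1 := hen n hn
  have h2 := hM (y n)
  rw [hval n] at h2
  exact_mod_cast (h1.trans_le (h2.trans hN))

end Biseparating

/-- If there is a linear biseparating map `T : Lip(X,E) → Lip(Y,F)` and `X` is
infinite, then `E` and `F` are isomorphic as topological vector spaces. -/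
theorem biseparating_isomorphic_ranges
    {𝕂 X Y E F : Type*} [RCLike 𝕂]
    [MetricSpace X] [CompleteSpace X] [MetricSpace Y] [CompleteSpace Y]
    [NormedAddCommGroup E] [NormedSpace 𝕂 E] [Nontrivial E]
    [NormedAddCommGroup F] [NormedSpace 𝕂 F] [Nontrivial F]
    (hXb : IsBounded (univ : Set X)) (hYb : IsBounded (univ : Set Y))
    (T : (X → E) → (Y → F)) (hT : IsBisep 𝕂 T)
    (hX : Infinite X) :
    Nonempty (E ≃L[𝕂] F) := by
  obtain ⟨S, hS, hST, hTS⟩ := hT.exists_inverse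
  obtain ⟨e, he⟩ := exists_ne (0 : E)
  obtain ⟨U, hUi, hUo, hU⟩ := exists_seq_infinite_isOpen_pairwise_disjoint X
  choose u hu using fun n => (hUi n).nonempty
  choose R hR _ hRU using fun n => exists_small_closedBall (hUo n) (hu n) one_pos
  choose x hx y hy hl hl' using fun n => exists_linked hT hS hST hTS (u := u n) (hR n) he
  have hB := fun n => isLip_cut_const 𝕂 (u n) (hR n) e
  have hV : Pairwise (Disjoint on fun n => coz (T (cut 𝕂 (u n) (R n) fun _ => e))) := by
    intro m n hmn
    refine disjoint_iff_inter_eq_empty.mpr (hT.sep _ _ (hB m) (hB n) ?_)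
    rw [coz_cut 𝕂 (hR m), coz_cut 𝕂 (hR n)]
    have hball : ∀ k, ball (u k) (R k) ⊆ U k := fun k => ball_subset_closedBall.trans (hRU k)
    exact disjoint_iff_inter_eq_empty.mp ((hU hmn).mono
      (inter_subset_left.trans (hball m)) (inter_subset_left.trans (hball n)))
  have h1 := finite_unbounded hT hl hU hUo fun n => hRU n (ball_subset_closedBall (hx n))
  have h2 := finite_unbounded hS hl' hV (fun n => (hT.maps_lip _ (hB n)).isOpen_coz) hy
  obtain ⟨n, hn⟩ := (h1.union h2).infinite_compl.nonempty
  simp only [compl_union, mem_inter_iff, mem_compl_iff, mem_ofPred_eq, not_not] at hn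
  obtain ⟨⟨C, hC⟩, C', hC'⟩ := hn
  exact ⟨(LinearEquiv.ofLinearMap (fiberMap hT (y n)) (fiberMap hS (x n))
    (LinearMap.ext fun w => fiberMap_leftInverse hS hT hTS (hl n) w)
    (LinearMap.ext fun v => fiberMap_leftInverse hT hS hST (hl' n) v)).toContinuousLinearEquivOfBounds
      C C' hC hC'⟩
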